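/- arXiv:1808.05435 — 3 statements merged into one kernel-verified Lean document; each statement's English description precedes it below -/
import Mathlib

section
/- Let A be a complex semisimple unital Banach algebra and let a, b ∈ A. Then a = b if and only if ρ(a + x) ≤ ρ(b + x) for all x in some open neighbourhood of −b. -/
open Complex

noncomputable section

/-- The nonzero spectrum `σ'(x) = σ(x) \ {0}` of an element of a complex algebra. -/
def nzSpec {A : Type*} [Ring A] [Algebra ℂ A] (x : A) : Set ℂ :=
  spectrum ℂ x \ {0}

/-- The spectral rank of an element: `rank a = sup_{x ∈ A} #σ'(xa)`, valued in `ℕ∞`. -/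
noncomputable def srank {A : Type*} [Ring A] [Algebra ℂ A] (a : A) : ℕ∞ :=
  ⨆ x : A, (nzSpec (x * a)).encard

/-- The socle of `A`: the set of finite-rank elements. -/
def socle (A : Type*) [Ring A] [Algebra ℂ A] : Set A :=
  {a : A | srank a ≠ ⊤}

/-- `A` is (Jacobson) semisimple: its Jacobson radical is `{0}`. -/
def JacobsonSemisimple (A : Type*) [Ring A] : Prop :=
  TwoSidedIdeal.jacobson (⊥ : TwoSidedIdeal A) = ⊥

/-- `Soc A` is a minimal two-sided ideal: it is a nonzero two-sided ideal containing
no two-sided ideals other than `{0}` and itself. -/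
def SocleIsMinimalTwoSidedIdeal (A : Type*) [Ring A] [Algebra ℂ A] : Prop :=
  ∃ I : TwoSidedIdeal A, (I : Set A) = socle A ∧ I ≠ ⊥ ∧
    ∀ J : TwoSidedIdeal A, J ≤ I → J = ⊥ ∨ J = I

/-- `A` is a prime algebra: all nonzero two-sided ideals `I, J` satisfy `IJ ≠ {0}`. -/
def IsPrimeAlgebra (A : Type*) [Ring A] : Prop :=
  ∀ I J : TwoSidedIdeal A, I ≠ ⊥ → J ≠ ⊥ → ∃ x ∈ I, ∃ y ∈ J, x * y ≠ 0

/-- The left annihilator of the socle equals `{0}`. -/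
def LeftAnnSocleTrivial (A : Type*) [Ring A] [Algebra ℂ A] : Prop :=
  {x : A | ∀ y ∈ socle A, x * y = 0} = {0}

/-!
Put `c = a - b`. The hypothesis says that `ρ(c + y) ≤ ρ(y)` for all small `y`, so `c + y` is
quasinilpotent for every small quasinilpotent `y`. For an arbitrary quasinilpotent `q` this makes
`s c + q = s (c + s⁻¹ q)` quasinilpotent for all large `s`, and the maximum principle for the
spectral radius carries this to `s = 1`. It remains to see that an element `c` whose sum with every
quasinilpotent is quasinilpotent is in the radical (Zemánek). If `c` is outside a maximal left ideal
`L`, then, `c` being quasinilpotent, Schur's lemma for the simple module `A ⧸ L` prevents right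
multiplication by `c` from preserving `L`, so some `w ∈ L` has `w c ≡ 1` modulo `L`. For `t ≠ 0`
small and `u = 1 + t w`, the number `t` is then in the spectrum of `c - u⁻¹ c u`, which is the sum
of `c` and a quasinilpotent.
-/

open Bornology Filter Topology
open scoped ENNReal NNReal

section RingJacobson

variable {R : Type*} [Ring R]

lemma JacobsonSemisimple.ringJacobson_eq_bot (h : JacobsonSemisimple R) :
    Ring.jacobson R = ⊥ := by
  rw [← Ideal.jacobson_bot, ← TwoSidedIdeal.bot_asIdeal, ← TwoSidedIdeal.asIdeal_jacobson, h]

lemma isUnit_one_add_of_mem_ringJacobson {c : R} (hc : c ∈ Ring.jacobson R) :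
    IsUnit (1 + c) := by
  have exists_left_inv : ∀ r ∈ Ring.jacobson R, ∃ s, s * (1 + r) = 1 := by
    intro r hr
    rw [← Ideal.jacobson_bot] at hr
    obtain ⟨s, hs⟩ := Ideal.exists_mul_add_sub_mem_of_mem_jacobson r hr
    exact ⟨s, by rwa [add_comm, ← sub_eq_zero]⟩
  obtain ⟨s, hs⟩ := exists_left_inv c hc
  have s_eq : s = 1 + -(s * c) := by rw [← hs]; noncomm_ring
  obtain ⟨s', hs'⟩ := exists_left_inv (-(s * c)) (neg_mem (Ideal.mul_mem_left _ s hc))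
  rw [← s_eq] at hs'
  exact isUnit_iff_exists.2 ⟨s, left_inv_eq_right_inv hs' hs ▸ hs', hs⟩

lemma isUnit_add_of_mem_ringJacobson {u c : R} (hu : IsUnit u) (hc : c ∈ Ring.jacobson R) :
    IsUnit (u + c) := by
  obtain ⟨u, rfl⟩ := hu
  have h := isUnit_one_add_of_mem_ringJacobson (Ideal.mul_mem_left _ (↑u⁻¹ : R) hc)
  simpa [mul_add] using u.isUnit.mul h

end RingJacobson

section Spectrum

lemma spectrum_add_subset_of_mem_ringJacobson {𝕜 A : Type*} [CommSemiring 𝕜] [Ring A] [Algebra 𝕜 A]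
    {c : A} (hc : c ∈ Ring.jacobson A) (x : A) : spectrum 𝕜 (x + c) ⊆ spectrum 𝕜 x := by
  intro μ hμ hu
  refine hμ ?_
  have := isUnit_add_of_mem_ringJacobson hu (neg_mem hc)
  rwa [← sub_eq_add_neg, sub_sub] at this

lemma mem_spectrum_of_sub_algebraMap_mem {𝕜 A : Type*} [CommSemiring 𝕜] [Ring A] [Algebra 𝕜 A]
    {L : Ideal A} (hL : L ≠ ⊤) {x : A} {μ : 𝕜} (h : x - algebraMap 𝕜 A μ ∈ L) :
    μ ∈ spectrum 𝕜 x := fun hu =>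
  hL (L.eq_top_of_isUnit_mem (by simpa using neg_mem h) hu)

variable {𝕜 A : Type*} [NormedField 𝕜] [Ring A] [Algebra 𝕜 A]

lemma eq_zero_of_mem_spectrum_of_spectralRadius_eq_zero {x : A} (hx : spectralRadius 𝕜 x = 0)
    {μ : 𝕜} (hμ : μ ∈ spectrum 𝕜 x) : μ = 0 := by
  simp only [spectralRadius, ENNReal.iSup_eq_zero] at hx
  simpa using hx μ hμ

lemma spectralRadius_units_conjugate' (x : A) (u : Aˣ) :
    spectralRadius 𝕜 (↑u⁻¹ * x * ↑u) = spectralRadius 𝕜 x := by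
  rw [spectralRadius, spectrum.units_conjugate', spectralRadius]

lemma spectralRadius_smul (s : 𝕜) (x : A) :
    spectralRadius 𝕜 (s • x) = ‖s‖₊ * spectralRadius 𝕜 x := by
  rcases eq_or_ne s 0 with rfl | hs
  · simp
  have hσ : spectrum 𝕜 (s • x) = (s • ·) '' spectrum 𝕜 x :=
    spectrum.unit_smul_eq_smul x (Units.mk0 s hs)
  simp only [spectralRadius, hσ, iSup_image, ENNReal.mul_iSup, smul_eq_mul, nnnorm_mul,
    ENNReal.coe_mul]

end Spectrum

section Schur

variable {A : Type*}

/-- By Schur's lemma `T - μ` is bijective or zero for every scalar `μ`, and bijectivity fails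
when `μ` lies in the spectrum of `T`. -/
theorem exists_forall_apply_eq_smul_of_isSimpleModule {M : Type*} [Ring A] [Algebra ℂ A]
    [NormedAddCommGroup M] [NormedSpace ℂ M] [CompleteSpace M] [Module A M] [IsScalarTower ℂ A M]
    [IsSimpleModule A M] (T : M →L[A] M) : ∃ μ : ℂ, ∀ m, T m = μ • m := by
  have : Nontrivial M := IsSimpleModule.nontrivial A M
  obtain ⟨μ, hμ⟩ := spectrum.nonempty (T.restrictScalars ℂ)
  refine ⟨μ, fun m => ?_⟩
  have not_bijective : ¬ Function.Bijective fun m => μ • m - T m := fun h =>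
    hμ (ContinuousLinearMap.isUnit_iff_bijective.2 h)
  have : SMulCommClass A ℂ M := IsScalarTower.to_smulCommClass'
  have eq_zero := (LinearMap.bijective_or_eq_zero (μ • LinearMap.id - (T : M →ₗ[A] M))).resolve_left
    not_bijective
  exact (sub_eq_zero.1 (DFunLike.congr_fun eq_zero m)).symm

variable [NormedRing A] [NormedAlgebra ℂ A] [CompleteSpace A]

lemma exists_sub_algebraMap_mem_of_forall_mul_mem (L : Ideal A) [hL : L.IsMaximal] {c : A}
    (hc : ∀ w ∈ L, w * c ∈ L) : ∃ μ : ℂ, c - algebraMap ℂ A μ ∈ L := by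
  have : IsSimpleModule A (A ⧸ L) := isSimpleModule_iff_isCoatom.2 hL.out
  let mulRight : A →L[A] A := ContinuousLinearMap.toSpanSingleton A c
  let T : (A ⧸ L) →L[A] (A ⧸ L) := L.liftQL (L.mkQL.comp mulRight) fun w hw =>
    (Submodule.Quotient.mk_eq_zero L).2 (hc w hw)
  obtain ⟨μ, hμ⟩ := exists_forall_apply_eq_smul_of_isSimpleModule T
  have T_one : T (Submodule.Quotient.mk 1) = Submodule.Quotient.mk c :=
    congrArg Submodule.Quotient.mk (one_mul c)
  refine ⟨μ, (Submodule.Quotient.eq L).1 ?_⟩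
  rw [Algebra.algebraMap_eq_smul_one, Submodule.Quotient.mk_smul, ← hμ, T_one]

lemma exists_mem_mul_sub_one_mem (L : Ideal A) [hL : L.IsMaximal] {c : A}
    (hc : ∀ μ : ℂ, c - algebraMap ℂ A μ ∉ L) : ∃ w ∈ L, w * c - 1 ∈ L := by
  obtain ⟨w, hw, hwc⟩ : ∃ w ∈ L, w * c ∉ L := by
    by_contra! h
    obtain ⟨μ, hμ⟩ := exists_sub_algebraMap_mem_of_forall_mul_mem L h
    exact hc μ hμ
  obtain ⟨v, l, hl, hvl⟩ := hL.exists_inv hwc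
  refine ⟨v * w, L.mul_mem_left v hw, ?_⟩
  rw [← hvl, mul_assoc, sub_add_cancel_left]
  exact neg_mem hl

end Schur

section Conjugation

lemma mem_spectrum_sub_units_conjugate' {𝕜 A : Type*} [CommRing 𝕜] [Ring A] [Algebra 𝕜 A]
    {L : Ideal A} (hL : L ≠ ⊤) {c w : A} (hw : w ∈ L) (hwc : w * c - 1 ∈ L) {t : 𝕜} {u : Aˣ}
    (hu : (u : A) = 1 + t • w) : t ∈ spectrum 𝕜 (c - ↑u⁻¹ * c * ↑u) := by
  refine mem_spectrum_of_sub_algebraMap_mem hL ?_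
  have factor : c - ↑u⁻¹ * c * ↑u - algebraMap 𝕜 A t =
      ↑u⁻¹ * (t • (w * c - 1) - t • (c * w) - (t * t) • w) := by
    rw [← Units.mul_right_inj u]
    simp only [mul_sub, mul_assoc, Units.mul_inv_cancel_left]
    simp only [hu, Algebra.algebraMap_eq_smul_one, smul_sub, smul_add, mul_add, add_mul,
      mul_smul_comm, smul_mul_assoc, smul_smul, one_mul, mul_one]
    abel
  rw [factor]
  exact L.mul_mem_left _ (sub_mem (sub_mem (L.smul_of_tower_mem t hwc)
    (L.smul_of_tower_mem t (L.mul_mem_left c hw))) (L.smul_of_tower_mem (t * t) hw))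

lemma exists_unit_eq_one_add_smul {𝕜 A : Type*} [NontriviallyNormedField 𝕜] [NormedRing A]
    [NormedAlgebra 𝕜 A] [HasSummableGeomSeries A] (w : A) :
    ∃ t : 𝕜, t ≠ 0 ∧ ∃ u : Aˣ, (u : A) = 1 + t • w := by
  have isUnit_near : ∀ᶠ t in 𝓝 (0 : 𝕜), IsUnit (1 + t • w) :=
    (Units.isOpen.preimage (by fun_prop : Continuous fun t : 𝕜 => 1 + t • w)).mem_nhds (by simp)
  obtain ⟨t, ht, ht0⟩ := ((isUnit_near.filter_mono nhdsWithin_le_nhds).and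
    (self_mem_nhdsWithin : {0}ᶜ ∈ 𝓝[≠] (0 : 𝕜))).exists
  exact ⟨t, ht0, ht⟩

end Conjugation

section MaximumPrinciple

lemma norm_pow_two_pow_lt_of_le {A : Type*} [SeminormedRing A] {x : A} {r : ℝ} {k m : ℕ}
    (h : ‖x ^ 2 ^ k‖ < r ^ 2 ^ k) (hkm : k ≤ m) : ‖x ^ 2 ^ m‖ < r ^ 2 ^ m := by
  induction m, hkm using Nat.le_induction with
  | base => exact h
  | succ m _ ih =>
    rw [pow_succ 2 m, pow_mul, pow_mul r]
    exact (norm_pow_le' _ two_pos).trans_lt (pow_lt_pow_left₀ ih (norm_nonneg _) two_ne_zero)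

variable {A : Type*} [NormedRing A] [NormedAlgebra ℂ A] [CompleteSpace A]

lemma eventually_norm_pow_lt_of_spectralRadius_lt {x : A} {r : ℝ≥0}
    (h : spectralRadius ℂ x < r) : ∀ᶠ n in atTop, ‖x ^ n‖ < r ^ n := by
  have gelfand := spectrum.pow_nnnorm_pow_one_div_tendsto_nhds_spectralRadius x
  filter_upwards [gelfand.eventually_lt_const h, eventually_gt_atTop 0] with n hn n_pos
  rw [one_div, ENNReal.rpow_inv_lt_iff (by positivity), ENNReal.rpow_natCast] at hn
  exact_mod_cast hn

lemma spectralRadius_le_of_frequently_norm_pow_le {x : A} {r : ℝ≥0}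
    (h : ∃ᶠ n in atTop, ‖x ^ n‖ ≤ r ^ n) : spectralRadius ℂ x ≤ r := by
  have gelfand := spectrum.pow_nnnorm_pow_one_div_tendsto_nhds_spectralRadius x
  refine le_of_tendsto_of_frequently gelfand
    ((h.and_eventually (eventually_gt_atTop 0)).mono fun n ⟨hn, n_pos⟩ => ?_)
  rw [one_div, ENNReal.rpow_inv_le_iff (by positivity), ENNReal.rpow_natCast]
  exact_mod_cast hn

/-- Dini's argument: along `n = 2 ^ k` the roots `‖f x ^ n‖ ^ (1 / n)` decrease to the spectral
radius of `f x`. -/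
lemma eventually_forall_norm_pow_lt_of_isCompact {X : Type*} [TopologicalSpace X] {K : Set X}
    (hK : IsCompact K) {f : X → A} (hf : ContinuousOn f K) {r : ℝ≥0}
    (h : ∀ x ∈ K, spectralRadius ℂ (f x) < r) :
    ∀ᶠ k : ℕ in atTop, ∀ x ∈ K, ‖f x ^ 2 ^ k‖ < r ^ 2 ^ k := by
  refine hK.induction_on (p := fun S => ∀ᶠ k : ℕ in atTop, ∀ x ∈ S, ‖f x ^ 2 ^ k‖ < r ^ 2 ^ k)
    (by simp) (fun S T hST hT => hT.mono fun k hk x hx => hk x (hST hx))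
    (fun S T hS hT => hS.mp (hT.mono fun k hkT hkS x hx => hx.elim (hkS x) (hkT x)))
    fun x hx => ?_
  obtain ⟨k, hk⟩ := ((tendsto_pow_atTop_atTop_of_one_lt one_lt_two).eventually
    (eventually_norm_pow_lt_of_spectralRadius_lt (h x hx))).exists
  have near : ∀ᶠ y in 𝓝[K] x, ‖f y ^ 2 ^ k‖ < r ^ 2 ^ k :=
    ((hf x hx).pow _).norm.eventually_lt_const hk
  refine ⟨_, near, ?_⟩
  filter_upwards [eventually_ge_atTop k] with m hkm y hy
  exact norm_pow_two_pow_lt_of_le hy hkm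

theorem spectralRadius_le_of_forall_mem_frontier_le {E : Type*} [NormedAddCommGroup E]
    [NormedSpace ℂ E] [Nontrivial E] [ProperSpace E] {f : E → A} {U : Set E} (hU : IsBounded U)
    (hd : DiffContOnCl ℂ f U) {M : ℝ≥0∞} (hM : ∀ z ∈ frontier U, spectralRadius ℂ (f z) ≤ M)
    {z : E} (hz : z ∈ closure U) : spectralRadius ℂ (f z) ≤ M := by
  refine le_of_forall_gt fun M' hM' => ?_
  obtain ⟨r, hMr, hrM'⟩ := ENNReal.lt_iff_exists_nnreal_btwn.1 hM'
  refine lt_of_le_of_lt ?_ hrM'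
  have frontier_compact : IsCompact (frontier U) :=
    hU.isCompact_closure.of_isClosed_subset isClosed_frontier frontier_subset_closure
  have frontier_bound := eventually_forall_norm_pow_lt_of_isCompact frontier_compact
    (hd.continuousOn.mono frontier_subset_closure) fun w hw => (hM w hw).trans_lt hMr
  have bound : ∀ᶠ k : ℕ in atTop, ‖f z ^ 2 ^ k‖ ≤ r ^ 2 ^ k := frontier_bound.mono fun k hk =>
    Complex.norm_le_of_forall_mem_frontier_norm_le hU
      ⟨hd.differentiableOn.pow _, hd.continuousOn.pow _⟩ (fun w hw => (hk w hw).le) hz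
  exact spectralRadius_le_of_frequently_norm_pow_le
    ((tendsto_pow_atTop_atTop_of_one_lt one_lt_two).frequently bound.frequently)

end MaximumPrinciple

section QuasinilpotentPerturbation

variable {A : Type*} [NormedRing A] [NormedAlgebra ℂ A] [CompleteSpace A]

lemma spectralRadius_add_eq_zero_of_eventually {c q : A}
    (h : ∀ᶠ y in 𝓝 (0 : A), spectralRadius ℂ y = 0 → spectralRadius ℂ (c + y) = 0)
    (hq : spectralRadius ℂ q = 0) : spectralRadius ℂ (c + q) = 0 := by
  have near_infinity : ∀ᶠ s : ℂ in cobounded ℂ, spectralRadius ℂ (s • c + q) = 0 := by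
    have tendsto_zero : Tendsto (fun s : ℂ => s⁻¹ • q) (cobounded ℂ) (𝓝 0) := by
      simpa using (tendsto_inv₀_cobounded (α := ℂ)).smul_const q
    filter_upwards [tendsto_zero.eventually h, eventually_ne_cobounded 0] with s hs s_ne
    have := hs (by rw [spectralRadius_smul, hq, mul_zero])
    rw [← smul_inv_smul₀ s_ne q, ← smul_add, spectralRadius_smul, this, mul_zero]
  obtain ⟨R, -, hR⟩ := hasBasis_cobounded_norm.eventually_iff.1 near_infinity
  set S := max R 1
  have S_pos : 0 < S := by positivity
  have le_zero : spectralRadius ℂ ((1 : ℂ) • c + q) ≤ 0 := by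
    refine spectralRadius_le_of_forall_mem_frontier_le (f := fun s : ℂ => s • c + q)
      (U := Metric.ball 0 S) Metric.isBounded_ball
      (by fun_prop : Differentiable ℂ fun s : ℂ => s • c + q).diffContOnCl (fun s hs => ?_) ?_
    · rw [frontier_ball _ S_pos.ne', mem_sphere_zero_iff_norm] at hs
      exact (hR (show R ≤ ‖s‖ from hs ▸ le_max_left R 1)).le
    · simp [closure_ball _ S_pos.ne', S]
  simpa using le_zero

theorem mem_ringJacobson_of_forall_spectralRadius_add_eq_zero {c : A}
    (h : ∀ q : A, spectralRadius ℂ q = 0 → spectralRadius ℂ (c + q) = 0) :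
    c ∈ Ring.jacobson A := by
  have hc : spectralRadius ℂ c = 0 := by simpa using h 0
  simp only [Ring.jacobson_eq_sInf_isMaximal, Submodule.mem_sInf, Set.mem_ofPred_eq]
  intro L hL
  by_contra hcL
  have not_scalar : ∀ μ : ℂ, c - algebraMap ℂ A μ ∉ L := by
    intro μ hμ
    obtain rfl := eq_zero_of_mem_spectrum_of_spectralRadius_eq_zero hc
      (mem_spectrum_of_sub_algebraMap_mem hL.ne_top hμ)
    exact hcL (by simpa using hμ)
  obtain ⟨w, hw, hwc⟩ := exists_mem_mul_sub_one_mem L not_scalar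
  obtain ⟨t, ht, u, hu⟩ := exists_unit_eq_one_add_smul (𝕜 := ℂ) w
  have conj_quasinilpotent : spectralRadius ℂ (-(↑u⁻¹ * c * ↑u)) = 0 := by
    rw [← neg_one_smul ℂ, spectralRadius_smul, spectralRadius_units_conjugate', hc, mul_zero]
  refine ht (eq_zero_of_mem_spectrum_of_spectralRadius_eq_zero (h _ conj_quasinilpotent) ?_)
  rw [← sub_eq_add_neg]
  exact mem_spectrum_sub_units_conjugate' hL.ne_top hw hwc hu

end QuasinilpotentPerturbation

theorem uniqueness_spectral_radius_translation_general
    {A : Type*} [NormedRing A] [NormedAlgebra ℂ A] [CompleteSpace A] (a b : A) :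
    a - b ∈ Ring.jacobson A ↔ ∃ U : Set A, IsOpen U ∧ -b ∈ U ∧
      ∀ x ∈ U, spectralRadius ℂ (a + x) ≤ spectralRadius ℂ (b + x) := by
  constructor
  · intro hab
    refine ⟨Set.univ, isOpen_univ, Set.mem_univ _, fun x _ => ?_⟩
    have := spectrum_add_subset_of_mem_ringJacobson (𝕜 := ℂ) hab (b + x)
    rw [show b + x + (a - b) = a + x by abel] at this
    exact biSup_mono this
  · rintro ⟨U, hU, hbU, h⟩
    have near_zero : ∀ᶠ y in 𝓝 (0 : A),
        spectralRadius ℂ y = 0 → spectralRadius ℂ (a - b + y) = 0 := by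
      have tendsto_neg : Tendsto (fun y => -b + y) (𝓝 0) (𝓝 (-b)) := by
        simpa using (continuous_const_add (-b)).tendsto 0
      filter_upwards [tendsto_neg.eventually (hU.mem_nhds hbU)] with y hy hy0
      have := h _ hy
      rwa [add_neg_cancel_left, ← add_assoc, ← sub_eq_add_neg, hy0, nonpos_iff_eq_zero] at this
    exact mem_ringJacobson_of_forall_spectralRadius_add_eq_zero fun q hq =>
      spectralRadius_add_eq_zero_of_eventually near_zero hq

theorem uniqueness_spectral_radius_translation
    {A : Type*} [NormedRing A] [NormOneClass A] [NormedAlgebra ℂ A] [CompleteSpace A]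
    (hss : JacobsonSemisimple A) (a b : A) :
    a = b ↔ ∃ U : Set A, IsOpen U ∧ -b ∈ U ∧
      ∀ x ∈ U, spectralRadius ℂ (a + x) ≤ spectralRadius ℂ (b + x) := by
  rw [← uniqueness_spectral_radius_translation_general, hss.ringJacobson_eq_bot, Submodule.mem_bot,
    sub_eq_zero]
end
end

section
/- Let A be a complex semisimple unital Banach algebra and let a, b ∈ Soc A. Then a = b if and only if σ(ax) = σ(bx) for every rank one element x ∈ A. -/
open Complex

noncomputable section

/-!
Let `c = a - b`. If `p` is a minimal idempotent, i.e. `p A p = ℂ p`, then every nonzero `u p v` has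
rank one, and `σ'(a u p v) = {k} \ {0}` where `p v a u p = k p`. Hence the hypothesis on spectra
gives `p v c u p = 0` for all `u` and `v`, so that `c u p = 0` by semisimplicity.

On the other hand, if `d` is a nonzero element of finite rank, then the left ideal `A d` contains a
minimal idempotent. Indeed, some `σ'(y d)` is finite and nonempty, and the Riesz projection of `y d`
is a nonzero idempotent in `A d`; one of least rank is primitive, and in a semisimple Banach algebra
a primitive idempotent of finite rank is minimal. The Riesz projection is obtained by applying to
`y d` a polynomial which takes the value `0` at `0` and `1` on `σ'(y d)`, and by correcting the
quasinilpotent defect `x = e - e²` of the result `e` by the power series of `(1 - 4 x)^(-1/2)`.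

If `c s ≠ 0` for some `s` in the socle, then `d = c s` yields a minimal idempotent `p = v c s`, and
`p = p² = v (c s p) = 0` is a contradiction. So `c` annihilates the socle, whence `c y c = 0` for
all `y`, and `c = 0` by semisimplicity.
-/

section Algebra

variable {A : Type*} [Ring A] [Algebra ℂ A]

theorem nzSpec_mul_comm (x y : A) : nzSpec (x * y) = nzSpec (y * x) :=
  spectrum.nonzero_mul_comm x y

theorem mem_nzSpec_iff {x : A} {k : ℂ} (hk : k ≠ 0) :
    k ∈ nzSpec x ↔ ¬IsUnit (algebraMap ℂ A k - x) :=
  and_iff_left hk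

theorem nzSpec_eq_empty_iff {x : A} :
    nzSpec x = ∅ ↔ ∀ k : ℂ, k ≠ 0 → IsUnit (algebraMap ℂ A k - x) := by
  refine Set.eq_empty_iff_forall_notMem.trans ⟨fun h k hk ↦ ?_, fun h k hk ↦ ?_⟩
  · simpa [mem_nzSpec_iff hk] using h k
  · exact hk.1 (h k hk.2)

theorem nzSpec_eq_empty_iff_spectralRadius_eq_zero {x : A} :
    nzSpec x = ∅ ↔ spectralRadius ℂ x = 0 := by
  simp [nzSpec, spectralRadius, Set.sdiff_eq_empty, Set.subset_def]

theorem nzSpec_eq_empty_of_mul_self_eq_zero {x : A} (hx : x * x = 0) : nzSpec x = ∅ := by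
  refine nzSpec_eq_empty_iff.2 fun k hk ↦ ?_
  have hnil : IsNilpotent x := ⟨2, by rw [sq, hx]⟩
  exact hnil.neg.isUnit_add_left_of_commute ((IsUnit.mk0 k hk).map (algebraMap ℂ A))
    (Algebra.commute_algebraMap_right k _) |> (sub_eq_add_neg _ x ▸ ·)

theorem nzSpec_add_of_mul_eq_zero {x y : A} (hxy : x * y = 0) (hyx : y * x = 0) :
    nzSpec (x + y) = nzSpec x ∪ nzSpec y := by
  ext k
  by_cases hk : k = 0
  · simp [nzSpec, hk]
  have hxy_comm : Commute x y := hxy.trans hyx.symm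
  have hcomm : Commute (algebraMap ℂ A k - x) (algebraMap ℂ A k - y) :=
    .sub_left
      (.sub_right (Algebra.commute_algebraMap_left _ _) (Algebra.commute_algebraMap_left _ _))
      (.sub_right (Algebra.commute_algebraMap_right _ _) hxy_comm)
  have hprod : (algebraMap ℂ A k - x) * (algebraMap ℂ A k - y)
      = k • (algebraMap ℂ A k - (x + y)) := by
    rw [sub_mul, mul_sub, mul_sub, hxy, ← Algebra.commutes k x, sub_zero, Algebra.smul_def]
    noncomm_ring
  have hunit := hcomm.isUnit_mul_iff
  rw [hprod, ← Units.smul_mk0 hk, isUnit_smul_iff] at hunit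
  rw [Set.mem_union, mem_nzSpec_iff hk, mem_nzSpec_iff hk, mem_nzSpec_iff hk, hunit, not_and_or]

theorem isUnit_smul_one_sub_add {p x u v : A} (hp : IsIdempotentElem p) (hpx : p * x = x)
    (hxp : x * p = x) (hxu : x * u = p) (hvx : v * x = p) {k : ℂ} (hk : k ≠ 0) :
    IsUnit (k • (1 - p) + x) := by
  have hx_right : x * (1 - p) = 0 := by rw [mul_sub, mul_one, hxp, sub_self]
  have hx_left : (1 - p) * x = 0 := by rw [sub_mul, one_mul, hpx, sub_self]
  have hxpu : x * (p * u) = p := by rw [← mul_assoc, hxp, hxu]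
  have hvpx : v * p * x = p := by rw [mul_assoc, hpx, hvx]
  refine isUnit_iff_exists_and_exists.2
    ⟨⟨k⁻¹ • (1 - p) + p * u, ?_⟩, ⟨k⁻¹ • (1 - p) + v * p, ?_⟩⟩
  · have hpu : (1 - p) * (p * u) = 0 := by rw [← mul_assoc, hp.one_sub_mul_self, zero_mul]
    simp [add_mul, mul_add, hp.one_sub.eq, hx_right, hxpu, hpu, smul_smul, hk]
  · have hvp : v * p * (1 - p) = 0 := by rw [mul_assoc, hp.mul_one_sub_self, mul_zero]
    simp [add_mul, mul_add, hp.one_sub.eq, hx_left, hvpx, hvp, smul_smul, hk]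

theorem isIdempotentElem_of_two_mul_sub_one_mul_self_eq_one {q : A}
    (hq : (2 * q - 1) * (2 * q - 1) = 1) : IsIdempotentElem q := by
  have h4 : (4 : ℂ) • (q * q - q) = 0 := by
    rw [← sub_eq_zero.2 hq, ofNat_smul_eq_nsmul]
    noncomm_ring
  exact sub_eq_zero.1 ((smul_eq_zero_iff_right (by norm_num)).1 h4)

theorem nzSpec_smul_of_isIdempotentElem {p : A} (hp : IsIdempotentElem p) (hp0 : p ≠ 0) (k : ℂ) :
    nzSpec (k • p) = {k} \ {0} := by
  ext z
  refine and_congr_left fun hz ↦ ⟨fun h ↦ by_contra fun hzk ↦ h ?_, ?_⟩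
  · have hzk0 : z - k ≠ 0 := sub_ne_zero.2 hzk
    have hdecomp : algebraMap ℂ A z - k • p = z • (1 - p) + (z - k) • p := by
      rw [Algebra.algebraMap_eq_smul_one]; module
    rw [spectrum.mem_resolventSet_iff, hdecomp]
    exact isUnit_smul_one_sub_add (u := (z - k)⁻¹ • p) (v := (z - k)⁻¹ • p) hp
      (by rw [mul_smul_comm, hp.eq]) (by rw [smul_mul_assoc, hp.eq])
      (by rw [smul_mul_smul_comm, mul_inv_cancel₀ hzk0, hp.eq, one_smul])
      (by rw [smul_mul_smul_comm, inv_mul_cancel₀ hzk0, hp.eq, one_smul]) hz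
  · rintro rfl hu
    refine hp0 (hu.mul_right_eq_zero.1 ?_)
    rw [Algebra.algebraMap_eq_smul_one, ← smul_sub, smul_mul_assoc, hp.one_sub_mul_self, smul_zero]

end Algebra

section Banach

variable {A : Type*} [NormedRing A] [NormedAlgebra ℂ A] [CompleteSpace A]

theorem spectralRadius_ne_top (a : A) : spectralRadius ℂ a ≠ ⊤ := by
  refine ne_top_of_le_ne_top ?_ (spectrum.spectralRadius_le_pow_nnnorm_pow_one_div ℂ a 0)
  simp [ENNReal.mul_eq_top]

theorem spectralRadius_mul_le_of_commute {a b : A} (hab : Commute a b) :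
    spectralRadius ℂ (a * b) ≤ spectralRadius ℂ a * spectralRadius ℂ b := by
  refine le_of_tendsto_of_tendsto' (spectrum.gelfand_formula (a * b))
    (ENNReal.Tendsto.mul (spectrum.gelfand_formula a) (.inr (spectralRadius_ne_top b))
      (spectrum.gelfand_formula b) (.inr (spectralRadius_ne_top a))) fun n ↦ ?_
  rw [← ENNReal.mul_rpow_of_nonneg _ _ (by positivity), hab.mul_pow]
  gcongr
  exact_mod_cast nnnorm_mul_le _ _

theorem nzSpec_mul_eq_empty_of_commute {a b : A} (hab : Commute a b) (hb : nzSpec b = ∅) :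
    nzSpec (a * b) = ∅ := by
  rw [nzSpec_eq_empty_iff_spectralRadius_eq_zero] at *
  exact le_zero_iff.1 ((spectralRadius_mul_le_of_commute hab).trans_eq (by rw [hb, mul_zero]))

theorem eventually_norm_pow_le_of_nzSpec_eq_empty {x : A} (hx : nzSpec x = ∅) {ε : ℝ}
    (hε : 0 < ε) : ∀ᶠ n : ℕ in Filter.atTop, ‖x ^ n‖ ≤ ε ^ n := by
  have hlim := spectrum.pow_norm_pow_one_div_tendsto_nhds_spectralRadius x
  rw [nzSpec_eq_empty_iff_spectralRadius_eq_zero.1 hx] at hlim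
  filter_upwards [hlim.eventually_lt_const (ENNReal.ofReal_pos.2 hε), Filter.eventually_ne_atTop 0]
    with n hn hn0
  have hroot : ‖x ^ n‖ ^ (n : ℝ)⁻¹ < ε := by
    simpa using (ENNReal.ofReal_lt_ofReal_iff hε).1 hn
  exact ((Real.rpow_inv_lt_iff_of_pos (norm_nonneg _) hε.le (by positivity)).1 hroot).le.trans_eq
    (Real.rpow_natCast ε n)

theorem summable_norm_smul_pow_of_nzSpec_eq_empty {x : A} (hx : nzSpec x = ∅) {c : ℕ → ℂ} {K : ℝ}
    (hK : 0 < K) (hc : ∀ n, ‖c n‖ ≤ K ^ n) : Summable fun n ↦ ‖c n • x ^ n‖ := by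
  refine Summable.of_norm_bounded_eventually_nat summable_geometric_two ?_
  filter_upwards [eventually_norm_pow_le_of_nzSpec_eq_empty hx (ε := (2 * K)⁻¹) (by positivity)]
    with n hn
  calc ‖‖c n • x ^ n‖‖ = ‖c n‖ * ‖x ^ n‖ := by rw [norm_norm, norm_smul]
    _ ≤ K ^ n * (2 * K)⁻¹ ^ n := by gcongr; exact hc n
    _ = (1 / 2) ^ n := by rw [← mul_pow]; field_simp

theorem exists_eq_one_add_mul_mul_self_of_nzSpec_eq_empty {x : A} (hx : nzSpec x = ∅) :
    ∃ c : A, c = 1 + x * (c * c) ∧ ∀ y, Commute y x → Commute y c := by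
  have hcat (n : ℕ) : ‖(catalan n : ℂ)‖ ≤ 4 ^ n := by
    have h : catalan n ≤ 4 ^ n := by
      rw [catalan_eq_centralBinom_div]
      exact (Nat.div_le_self _ _).trans (Nat.centralBinom_le_four_pow n)
    simpa using mod_cast h
  have hs := summable_norm_smul_pow_of_nzSpec_eq_empty hx four_pos hcat
  refine ⟨∑' n, (catalan n : ℂ) • x ^ n, ?_,
    fun y hy ↦ .tsum_right _ fun n ↦ (hy.pow_right n).smul_right _⟩
  have hconv := (summable_norm_sum_mul_antidiagonal_of_summable_norm hs hs).of_norm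
  rw [tsum_mul_tsum_eq_tsum_sum_antidiagonal_of_summable_norm hs hs, ← hconv.tsum_mul_left,
    hs.of_norm.tsum_eq_zero_add]
  congr 1
  · simp
  refine tsum_congr fun n ↦ ?_
  rw [catalan_succ', Nat.cast_sum, Finset.sum_smul, Finset.mul_sum]
  refine Finset.sum_congr rfl fun ij hij ↦ ?_
  rw [← Finset.HasAntidiagonal.mem_antidiagonal.1 hij, smul_mul_smul_comm, ← pow_add,
    mul_smul_comm, ← pow_succ', Nat.cast_mul]

theorem exists_invSqrt_one_sub_four_mul_of_nzSpec_eq_empty {x : A} (hx : nzSpec x = ∅) :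
    ∃ t : A, (1 + 2 * x * t) * (1 + 2 * x * t) * (1 - 4 * x) = 1 ∧
      ∀ y, Commute y x → Commute y t := by
  obtain ⟨c, hc, hcomm⟩ := exists_eq_one_add_mul_mul_self_of_nzSpec_eq_empty hx
  have hxc : Commute x c := hcomm x (.refl x)
  have hsqrt : (1 - 2 * x * c) * (1 - 2 * x * c) = 1 - 4 * x := by
    have hxcc : x * c * (x * c) = x * c - x := by
      rw [eq_sub_iff_add_eq', mul_assoc, ← mul_assoc c, ← hxc.eq, mul_assoc x c, ← mul_one_add,
        ← hc]
    calc (1 - 2 * x * c) * (1 - 2 * x * c) = 1 - 4 * (x * c) + 4 * (x * c * (x * c)) := by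
          noncomm_ring
      _ = 1 - 4 * x := by rw [hxcc]; noncomm_ring
  have hunit : IsUnit (1 - 4 * x) := by
    have h := ((IsUnit.mk0 (4 : ℂ) (by norm_num)).map (algebraMap ℂ A)).mul
      (nzSpec_eq_empty_iff.1 hx (1 / 4) (by norm_num))
    rwa [mul_sub, ← map_mul, mul_one_div_cancel (by norm_num), map_one, map_ofNat] at h
  obtain ⟨r, hr⟩ := ((Commute.refl _).isUnit_mul_iff.1 (hsqrt ▸ hunit)).1
  have hrinv : 1 + 2 * x * (c * ↑r⁻¹) = ↑r⁻¹ := by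
    have h : (1 - 2 * x * c) * ↑r⁻¹ = 1 := by rw [← hr, r.mul_inv]
    rwa [sub_mul, one_mul, sub_eq_iff_eq_add, mul_assoc, eq_comm] at h
  refine ⟨c * ↑r⁻¹, ?_, fun y hy ↦ ?_⟩
  · rw [hrinv, ← hsqrt, ← hr, mul_assoc, ← mul_assoc _ (r : A), r.inv_mul, one_mul, r.inv_mul]
  · have hyc : Commute y c := hcomm y hy
    have hyr : Commute y r := hr ▸
      (Commute.one_right y).sub_right (((Commute.ofNat_right y 2).mul_right hy).mul_right hyc)
    exact hyc.mul_right hyr.units_inv_right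

theorem exists_isIdempotentElem_mul_of_nzSpec_sub_mul_self_eq_empty {e : A}
    (he : nzSpec (e - e * e) = ∅) :
    ∃ k l : A, Commute e k ∧ Commute e l ∧ IsIdempotentElem (e * k) ∧ 1 - e * k = (1 - e) * l := by
  obtain ⟨t, ht, hcomm⟩ := exists_invSqrt_one_sub_four_mul_of_nzSpec_eq_empty he
  have hex : Commute e (e - e * e) :=
    (Commute.refl e).sub_right ((Commute.refl e).mul_right (.refl e))
  have het : Commute e t := hcomm e hex
  have he2 : Commute e (2 * e - 1) :=
    ((Commute.ofNat_right e 2).mul_right (.refl e)).sub_right (.one_right e)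
  set s : A := 1 + 2 * (e - e * e) * t with hs
  have hes : Commute e s :=
    (Commute.one_right e).add_right (((Commute.ofNat_right e 2).mul_right hex).mul_right het)
  have hs2 : Commute (2 * e - 1) s :=
    ((Commute.ofNat_left 2 s).mul_left hes).sub_left (.one_left s)
  have hinv : (2 * e - 1) * s * ((2 * e - 1) * s) = 1 := by
    have hsq : (2 * e - 1) * (2 * e - 1) = 1 - 4 * (e - e * e) := by noncomm_ring
    have hs4 : Commute (1 - 4 * (e - e * e)) (s * s) := by
      rw [← hsq]
      exact (hs2.mul_right hs2).mul_left (hs2.mul_right hs2)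
    rw [← hs2.mul_mul_mul_comm, hsq, hs4.eq, ht]
  -- `(2 * e - 1) * s` squares to `1`, so half its sum with `1` is idempotent; `k` is chosen so that
  -- this idempotent is `e * k`.
  refine ⟨1 + (2 * e - 1) * (1 - e) * t, 1 - (2 * e - 1) * e * t, ?_, ?_, ?_, by noncomm_ring⟩
  · exact .add_right (.one_right e)
      ((he2.mul_right ((Commute.one_right e).sub_right (.refl e))).mul_right het)
  · exact .sub_right (.one_right e) ((he2.mul_right (.refl e)).mul_right het)
  · refine isIdempotentElem_of_two_mul_sub_one_mul_self_eq_one ?_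
    have hk : 2 * (e * (1 + (2 * e - 1) * (1 - e) * t)) - 1 = (2 * e - 1) * s := by
      rw [hs]; noncomm_ring
    rw [hk, hinv]

open Polynomial in
theorem exists_isIdempotentElem_of_finite_nzSpec {w : A} (hfin : (nzSpec w).Finite)
    (hne : (nzSpec w).Nonempty) :
    ∃ q u v : A, IsIdempotentElem q ∧ q ≠ 0 ∧ w * u = q ∧ v * w = q := by
  let g : ℂ[X] := Lagrange.interpolate hfin.toFinset id (·⁻¹)
  have hg {z : ℂ} (hz : z ∈ nzSpec w) : g.eval z = z⁻¹ :=
    Lagrange.eval_interpolate_at_node _ Function.injective_id.injOn (hfin.mem_toFinset.2 hz)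
  have hXg : aeval w (X * g) = w * aeval w g := by rw [map_mul, aeval_X]
  have hgX : aeval w (X * g) = aeval w g * w := by rw [mul_comm, map_mul, aeval_X]
  obtain ⟨z, hz⟩ := hne
  have hidem : nzSpec (aeval w (X * g) - aeval w (X * g) * aeval w (X * g)) = ∅ := by
    rw [← map_mul, ← map_sub, nzSpec, spectrum.map_polynomial_aeval_of_nonempty _ _ ⟨z, hz.1⟩,
      Set.sdiff_eq_empty]
    rintro _ ⟨y, hy, rfl⟩
    by_cases hy0 : y = 0
    · simp [hy0]
    · simp [hg ⟨hy, hy0⟩, hy0]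
  have h1 : (1 : ℂ) ∈ spectrum ℂ (aeval w (X * g)) := by
    have hz0 : z ≠ 0 := hz.2
    convert spectrum.subset_polynomial_aeval w (X * g) ⟨z, hz.1, rfl⟩
    simp [hg hz, hz0]
  obtain ⟨k, l, hk, hl, hq, hq1⟩ :=
    exists_isIdempotentElem_mul_of_nzSpec_sub_mul_self_eq_empty hidem
  refine ⟨_, aeval w g * k, k * aeval w g, hq, fun h0 ↦ ?_, ?_, ?_⟩
  · rw [h0, sub_zero] at hq1
    refine h1 ?_
    rw [spectrum.mem_resolventSet_iff, map_one]
    exact (((Commute.one_left l).sub_left hl).isUnit_mul_iff.1 (hq1 ▸ isUnit_one)).1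
  · rw [hXg, mul_assoc]
  · rw [hk.eq, hgX, mul_assoc]

end Banach

section Rank

variable {A : Type*} [Ring A] [Algebra ℂ A]

theorem encard_nzSpec_mul_le_srank (x a : A) : (nzSpec (x * a)).encard ≤ srank a :=
  le_iSup (fun x : A ↦ (nzSpec (x * a)).encard) x

theorem finite_nzSpec_mul {a : A} (ha : a ∈ socle A) (x : A) : (nzSpec (x * a)).Finite :=
  Set.encard_ne_top_iff.1 (ne_top_of_le_ne_top ha (encard_nzSpec_mul_le_srank x a))

theorem srank_mul_mul_le (u a v : A) : srank (u * a * v) ≤ srank a :=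
  iSup_le fun x ↦ by
    rw [← mul_assoc, nzSpec_mul_comm, ← mul_assoc, ← mul_assoc]
    exact encard_nzSpec_mul_le_srank _ a

theorem mul_mul_mem_socle {a : A} (ha : a ∈ socle A) (u v : A) : u * a * v ∈ socle A :=
  ne_top_of_le_ne_top ha (srank_mul_mul_le u a v)

theorem JacobsonSemisimple.eq_zero_of_forall_nzSpec_mul_eq_empty (hss : JacobsonSemisimple A)
    {c : A} (hc : ∀ y, nzSpec (y * c) = ∅) : c = 0 := by
  suffices c ∈ TwoSidedIdeal.jacobson (⊥ : TwoSidedIdeal A) by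
    rwa [hss] at this
  refine TwoSidedIdeal.mem_jacobson_iff.2 fun y ↦ ?_
  obtain ⟨u, hu⟩ := nzSpec_eq_empty_iff.1 (hc (-y)) 1 one_ne_zero
  have hinv : (↑u⁻¹ : A) * y * c + ↑u⁻¹ = 1 := by
    have h := u.inv_mul
    rw [hu, map_one] at h
    rw [← h]
    noncomm_ring
  exact ⟨↑u⁻¹, by rw [hinv, sub_self]; exact TwoSidedIdeal.zero_mem _⟩

theorem JacobsonSemisimple.eq_zero_of_forall_mul_mul_eq_zero (hss : JacobsonSemisimple A)
    {c : A} (hc : ∀ y, c * y * c = 0) : c = 0 :=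
  hss.eq_zero_of_forall_nzSpec_mul_eq_empty fun y ↦ nzSpec_eq_empty_of_mul_self_eq_zero <| by
    rw [mul_assoc, ← mul_assoc c, hc, mul_zero]

theorem JacobsonSemisimple.srank_ne_zero (hss : JacobsonSemisimple A) {a : A} (ha : a ≠ 0) :
    srank a ≠ 0 := fun h ↦ ha <| hss.eq_zero_of_forall_nzSpec_mul_eq_empty fun y ↦
  Set.encard_eq_zero.1 (le_zero_iff.1 (h ▸ encard_nzSpec_mul_le_srank y a))

theorem srank_lt_srank_of_isIdempotentElem {p q : A} (hp : IsIdempotentElem p)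
    (hq : IsIdempotentElem q) (hpq : p * q = q) (hqp : q * p = q) (hne : q ≠ p)
    (hfin : srank q ≠ ⊤) : srank q < srank p := by
  obtain ⟨y, hy⟩ := ENat.exists_eq_iSup_of_lt_top hfin.lt_top
  have hw : nzSpec (y * q) = nzSpec (q * y * q) := by
    rw [nzSpec_mul_comm (q * y), ← mul_assoc, hq.eq, nzSpec_mul_comm]
  set w := q * y * q with hwdef
  have hwfin : (nzSpec w).Finite := hw ▸ finite_nzSpec_mul hfin y
  obtain ⟨k, hk⟩ := (hwfin.insert 0).exists_notMem
  rw [Set.mem_insert_iff, not_or] at hk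
  have hsub : IsIdempotentElem (p - q) := by
    simp [IsIdempotentElem, mul_sub, sub_mul, hp.eq, hq.eq, hpq, hqp]
  have hspec : nzSpec (w + k • (p - q)) = insert k (nzSpec w) := by
    rw [nzSpec_add_of_mul_eq_zero,
      nzSpec_smul_of_isIdempotentElem hsub (sub_ne_zero.2 hne.symm),
      Set.sdiff_singleton_eq_self (by simpa [eq_comm] using hk.1), Set.union_singleton]
    · simp [hwdef, mul_sub, mul_assoc, hqp, hq.eq]
    · simp [hwdef, sub_mul, ← mul_assoc, hpq, hq.eq]
  calc srank q = (nzSpec w).encard := by rw [← hw, srank, ← hy]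
    _ < (insert k (nzSpec w)).encard := hwfin.encard_lt_encard (Set.ssubset_insert hk.2)
    _ = (nzSpec ((w + k • (p - q)) * p)).encard := by
      rw [← hspec]
      congr 2
      simp [hwdef, add_mul, sub_mul, mul_assoc, hqp, hp.eq]
    _ ≤ srank p := encard_nzSpec_mul_le_srank _ p

end Rank

/-- Primitive idempotents: nonzero idempotents `p` such that the only nonzero idempotent of the
corner ring `p A p` is `p`, where membership in `p A p` is expressed by `p * q = q = q * p`. -/
structure IsPrimitiveIdempotent {A : Type*} [Ring A] (p : A) : Prop where
  isIdempotentElem : IsIdempotentElem p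
  ne_zero : p ≠ 0
  eq_of_mul_eq : ∀ q, IsIdempotentElem q → q ≠ 0 → p * q = q → q * p = q → q = p

/-- Minimal idempotents of a complex algebra, in the sense of Banach algebra theory: nonzero
idempotents `p` with `p A p = ℂ p`. -/
structure IsMinimalIdempotent {A : Type*} [Ring A] [Algebra ℂ A] (p : A) : Prop where
  isIdempotentElem : IsIdempotentElem p
  ne_zero : p ≠ 0
  exists_mul_mul_eq_smul : ∀ y, ∃ k : ℂ, p * y * p = k • p

section MinimalIdempotent

variable {A : Type*} [Ring A] [Algebra ℂ A]

theorem IsMinimalIdempotent.nzSpec_mul {p y : A} (hp : IsMinimalIdempotent p) {k : ℂ}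
    (hk : p * y * p = k • p) : nzSpec (y * p) = {k} \ {0} := by
  rw [← nzSpec_smul_of_isIdempotentElem hp.isIdempotentElem hp.ne_zero, ← hk, mul_assoc,
    nzSpec_mul_comm p, mul_assoc, hp.isIdempotentElem.eq]

theorem IsMinimalIdempotent.srank_mul_mul_eq_one (hss : JacobsonSemisimple A) {p : A}
    (hp : IsMinimalIdempotent p) {u v : A} (huv : u * p * v ≠ 0) : srank (u * p * v) = 1 := by
  refine le_antisymm ((srank_mul_mul_le u p v).trans (iSup_le fun x ↦ ?_))
    (Order.one_le_iff_ne_zero.2 (hss.srank_ne_zero huv))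
  obtain ⟨k, hk⟩ := hp.exists_mul_mul_eq_smul x
  rw [hp.nzSpec_mul hk]
  exact (Set.encard_le_encard Set.sdiff_subset).trans_eq (Set.encard_singleton k)

theorem IsMinimalIdempotent.sub_mul_mul_eq_zero (hss : JacobsonSemisimple A) {p a b : A}
    (hp : IsMinimalIdempotent p) (h : ∀ x, srank x = 1 → nzSpec (a * x) = nzSpec (b * x)) (u : A) :
    (a - b) * u * p = 0 := by
  refine hss.eq_zero_of_forall_nzSpec_mul_eq_empty fun v ↦ ?_
  obtain ⟨k, hk⟩ := hp.exists_mul_mul_eq_smul (v * a * u)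
  obtain ⟨l, hl⟩ := hp.exists_mul_mul_eq_smul (v * b * u)
  have hspec (c : A) : nzSpec (c * (u * p * v)) = nzSpec (v * c * u * p) := by
    rw [← mul_assoc, nzSpec_mul_comm, ← mul_assoc, ← mul_assoc]
  have hab : nzSpec (a * (u * p * v)) = nzSpec (b * (u * p * v)) := by
    by_cases huv : u * p * v = 0
    · rw [huv, mul_zero, mul_zero]
    · exact h _ (hp.srank_mul_mul_eq_one hss huv)
  have hkl : k = l := by
    rw [hspec, hspec, hp.nzSpec_mul hk, hp.nzSpec_mul hl] at hab
    have hiff : ∀ z ≠ 0, z = k ↔ z = l := by simpa [Set.ext_iff] using hab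
    by_contra hne
    rcases eq_or_ne k 0 with rfl | hk0
    · exact hne ((hiff l (Ne.symm hne)).2 rfl).symm
    · exact hne ((hiff k hk0).1 rfl)
  have hzero : p * (v * (a - b) * u) * p = (0 : ℂ) • p := by
    rw [mul_sub, sub_mul, mul_sub, sub_mul, hk, hl, hkl, sub_self, zero_smul]
  rw [← mul_assoc, ← mul_assoc, hp.nzSpec_mul hzero, Set.sdiff_self]

end MinimalIdempotent

section PrimitiveIdempotent

variable {A : Type*} [NormedRing A] [NormedAlgebra ℂ A] [CompleteSpace A]

theorem IsPrimitiveIdempotent.exists_mul_eq {p w : A} (hp : IsPrimitiveIdempotent p)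
    (hpw : p * w = w) (hwp : w * p = w) (hfin : (nzSpec w).Finite) (hne : (nzSpec w).Nonempty) :
    ∃ u v, w * u = p ∧ v * w = p := by
  obtain ⟨q, u, v, hq, hq0, hu, hv⟩ := exists_isIdempotentElem_of_finite_nzSpec hfin hne
  have hqp : q = p := hp.eq_of_mul_eq q hq hq0 (by rw [← hu, ← mul_assoc, hpw])
    (by rw [← hv, mul_assoc, hwp])
  exact ⟨u, v, hu.trans hqp, hv.trans hqp⟩

theorem IsPrimitiveIdempotent.eq_zero_of_nzSpec_eq_empty (hss : JacobsonSemisimple A) {p w : A}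
    (hp : IsPrimitiveIdempotent p) (hfin : ∀ y, (nzSpec (y * p)).Finite) (hpw : p * w = w)
    (hwp : w * p = w) (hw : nzSpec w = ∅) : w = 0 := by
  have hpp := hp.isIdempotentElem.eq
  refine hss.eq_zero_of_forall_nzSpec_mul_eq_empty fun y ↦ ?_
  by_contra hne
  -- Now `w` turns out to be invertible in `p A p`, with an inverse that commutes with it; then
  -- `p`, being the product of `w` and this inverse, is quasinilpotent, which is absurd.
  set z := p * y * p with hz
  have hpz : p * z = z := by rw [hz, ← mul_assoc, ← mul_assoc, hpp]
  have hzp : z * p = z := by rw [hz, mul_assoc, hpp]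
  have hspec : nzSpec (z * w) = nzSpec (y * w) := by
    rw [hz, mul_assoc, hpw, mul_assoc, nzSpec_mul_comm, mul_assoc, hwp]
  obtain ⟨-, v, -, hv⟩ := hp.exists_mul_eq (w := z * w) (by rw [← mul_assoc, hpz])
    (by rw [mul_assoc, hwp]) (by rw [← hwp, ← mul_assoc]; exact hfin _)
    (by rwa [hspec, Set.nonempty_iff_ne_empty])
  obtain ⟨u, -, hu, -⟩ := hp.exists_mul_eq (w := w * z) (by rw [← mul_assoc, hpw])
    (by rw [mul_assoc, hzp]) (by rw [← hzp, ← mul_assoc]; exact hfin _)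
    (by rwa [nzSpec_mul_comm, hspec, Set.nonempty_iff_ne_empty])
  have hinv : z * u = v * z := by
    calc z * u = v * (z * w) * (z * u) := by rw [hv, ← mul_assoc, hpz]
      _ = v * z * (w * z * u) := by simp only [mul_assoc]
      _ = v * z := by rw [hu, mul_assoc, hzp]
  have hleft : v * z * w = p := by rw [mul_assoc, hv]
  have hcomm : Commute (v * z) w := by
    rw [Commute, SemiconjBy, hleft, ← hinv, ← mul_assoc, hu]
  have hpspec := nzSpec_smul_of_isIdempotentElem hp.isIdempotentElem hp.ne_zero 1
  rw [one_smul, ← hleft, nzSpec_mul_eq_empty_of_commute hcomm hw] at hpspec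
  simp at hpspec

theorem IsPrimitiveIdempotent.isMinimalIdempotent (hss : JacobsonSemisimple A) {p : A}
    (hp : IsPrimitiveIdempotent p) (hfin : ∀ y, (nzSpec (y * p)).Finite) :
    IsMinimalIdempotent p := by
  have hpp := hp.isIdempotentElem.eq
  refine ⟨hp.isIdempotentElem, hp.ne_zero, fun y ↦ ?_⟩
  set w := p * y * p with hw
  have hpw : p * w = w := by rw [hw, ← mul_assoc, ← mul_assoc, hpp]
  have hwp : w * p = w := by rw [hw, mul_assoc, hpp]
  rcases (nzSpec w).eq_empty_or_nonempty with hempty | ⟨k, hk, hk0⟩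
  · exact ⟨0, by rw [zero_smul, hp.eq_zero_of_nzSpec_eq_empty hss hfin hpw hwp hempty]⟩
  set x := k • p - w with hx
  have hpx : p * x = x := by rw [hx, mul_sub, mul_smul_comm, hpp, hpw]
  have hxp : x * p = x := by rw [hx, sub_mul, smul_mul_assoc, hpp, hwp]
  have hxempty : nzSpec x = ∅ := by
    by_contra hne
    obtain ⟨u, v, hu, hv⟩ := hp.exists_mul_eq hpx hxp (hxp ▸ hfin x)
      (Set.nonempty_iff_ne_empty.2 hne)
    have hunit := isUnit_smul_one_sub_add hp.isIdempotentElem hpx hxp hu hv hk0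
    refine hk ?_
    rw [spectrum.mem_resolventSet_iff, Algebra.algebraMap_eq_smul_one]
    convert hunit using 1
    rw [hx, smul_sub]
    abel
  exact ⟨k, (sub_eq_zero.1 (hp.eq_zero_of_nzSpec_eq_empty hss hfin hpx hxp hxempty)).symm⟩

theorem exists_isPrimitiveIdempotent_mul_eq (hss : JacobsonSemisimple A) {d : A}
    (hd : d ∈ socle A) (hd0 : d ≠ 0) : ∃ p v, IsPrimitiveIdempotent p ∧ v * d = p := by
  let S : Set A := {q | IsIdempotentElem q ∧ q ≠ 0 ∧ ∃ v, v * d = q}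
  have hS : S.Nonempty := by
    obtain ⟨y, hy⟩ : ∃ y, nzSpec (y * d) ≠ ∅ := by
      by_contra! h
      exact hd0 (hss.eq_zero_of_forall_nzSpec_mul_eq_empty h)
    obtain ⟨q, -, v, hq, hq0, -, hv⟩ := exists_isIdempotentElem_of_finite_nzSpec
      (finite_nzSpec_mul hd y) (Set.nonempty_iff_ne_empty.2 hy)
    exact ⟨q, hq, hq0, v * y, by rw [mul_assoc, hv]⟩
  obtain ⟨p, ⟨hp, hp0, v, rfl⟩, hmin⟩ := exists_minimalFor_of_wellFoundedLT (· ∈ S) srank hS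
  refine ⟨v * d, v, ⟨hp, hp0, fun q hq hq0 hpq hqp ↦ by_contra fun hne ↦ ?_⟩, rfl⟩
  have hqd : q * v * d = q := by rw [mul_assoc, hqp]
  have hqfin : q ∈ socle A := by
    rw [← hqd, ← mul_one (q * v * d)]
    exact mul_mul_mem_socle hd _ _
  have hlt := srank_lt_srank_of_isIdempotentElem hp hq hpq hqp hne hqfin
  exact hlt.not_ge (hmin ⟨hq, hq0, q * v, hqd⟩ hlt.le)

theorem exists_isMinimalIdempotent_mul_eq (hss : JacobsonSemisimple A) {d : A}
    (hd : d ∈ socle A) (hd0 : d ≠ 0) : ∃ p v, IsMinimalIdempotent p ∧ v * d = p := by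
  obtain ⟨p, v, hp, rfl⟩ := exists_isPrimitiveIdempotent_mul_eq hss hd hd0
  exact ⟨_, v, hp.isMinimalIdempotent hss fun y ↦ by
    rw [← mul_assoc]; exact finite_nzSpec_mul hd _, rfl⟩

theorem sub_mul_eq_zero_of_mem_socle (hss : JacobsonSemisimple A) {a b s : A}
    (h : ∀ x, srank x = 1 → nzSpec (a * x) = nzSpec (b * x)) (hs : s ∈ socle A) :
    (a - b) * s = 0 := by
  by_contra hne
  obtain ⟨p, v, hp, hv⟩ := exists_isMinimalIdempotent_mul_eq hss
    (by simpa using mul_mul_mem_socle hs (a - b) 1) hne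
  refine hp.ne_zero ?_
  calc p = v * ((a - b) * s) * p := by rw [hv, hp.isIdempotentElem.eq]
    _ = 0 := by rw [mul_assoc, hp.sub_mul_mul_eq_zero hss h, mul_zero]

end PrimitiveIdempotent

theorem socle_eq_iff_spectrum_mul_rank_one_general
    {A : Type*} [NormedRing A] [NormedAlgebra ℂ A] [CompleteSpace A]
    (hss : JacobsonSemisimple A) {a b : A} (hab : a - b ∈ Ideal.span (socle A)) :
    a = b ↔ ∀ x : A, srank x = 1 → spectrum ℂ (a * x) = spectrum ℂ (b * x) := by
  refine ⟨fun h _ _ ↦ by rw [h], fun h ↦ sub_eq_zero.1 ?_⟩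
  have hspan {s : A} (hs : s ∈ Ideal.span (socle A)) : ∀ y, (a - b) * y * s = 0 := by
    induction hs using Submodule.span_induction with
    | mem s hs =>
      intro y
      rw [mul_assoc]
      exact sub_mul_eq_zero_of_mem_socle hss (fun x hx ↦ by rw [nzSpec, h x hx, nzSpec])
        (by simpa using mul_mul_mem_socle hs y 1)
    | zero => exact fun y ↦ mul_zero _
    | add s t _ _ hs ht => exact fun y ↦ by rw [mul_add, hs, ht, add_zero]
    | smul r s _ hs => exact fun y ↦ by rw [smul_eq_mul, ← mul_assoc, mul_assoc _ y, hs]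
  exact hss.eq_zero_of_forall_mul_mul_eq_zero (hspan hab)

theorem socle_eq_iff_spectrum_mul_rank_one
    {A : Type*} [NormedRing A] [NormOneClass A] [NormedAlgebra ℂ A] [CompleteSpace A]
    (hss : JacobsonSemisimple A) (a b : A) (ha : a ∈ socle A) (hb : b ∈ socle A) :
    a = b ↔ ∀ x : A, srank x = 1 → spectrum ℂ (a * x) = spectrum ℂ (b * x) :=
  socle_eq_iff_spectrum_mul_rank_one_general hss
    (sub_mem (Ideal.subset_span ha) (Ideal.subset_span hb))
end
end

section
/- Let A be a complex semisimple unital Banach algebra whose socle Soc A is a minimal two-sided ideal. Let a, b ∈ A with b = pt, where p is an idempotent belonging to Soc A and t is invertible in A. If ρ(ax) ≤ ρ(bx) for all x ∈ A, then a = λb for some λ ∈ ℂ with |λ| ≤ 1. -/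
open Complex

noncomputable section

/-! A simple module `M = A ⧸ L` with `b • M ≠ 0` is faithful on the minimal ideal `I` containing
`b`. By Schur's lemma (in its Gelfand–Mazur form) and Jacobson density, every linear map of `M`
agrees on finitely many vectors with the action of an element of `A`; since `b` has finite rank,
`b • M` is finite-dimensional. If some `a • m` were not a multiple of `b • m`, density would give
an `x ∈ A` acting on `b • M` as a rank-one operator with `x • b • m = 0` and `x • a • m = m`; then
`x * b` squares to zero on `M`, hence in `A`, while `1 ∈ σ(x * a)`, contradicting
`ρ(a * x) ≤ ρ(b * x)`. So `a` acts on `M` as a multiple `c` of `b`. Density also gives `d` with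
`b * d * b = b`, and semisimplicity then forces `a = b * d * a ∈ I`, so that `a = c • b` by
faithfulness. -/

section SpectralRadius

variable {𝕜 A : Type*}

theorem mem_spectrum_of_smul_eq_smul {M : Type*} [CommRing 𝕜] [Ring A] [Algebra 𝕜 A]
    [AddCommGroup M] [Module 𝕜 M] [Module A M] [IsScalarTower 𝕜 A M] {x : A} {k : 𝕜} {m : M}
    (hm : m ≠ 0) (h : x • m = k • m) : k ∈ spectrum 𝕜 x := by
  intro hunit
  refine hm (hunit.smul_eq_zero.1 ?_)
  rw [sub_smul, h, algebraMap_smul, sub_self]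

variable [NormedField 𝕜] [Ring A] [Algebra 𝕜 A]

theorem nnnorm_le_spectralRadius {x : A} {k : 𝕜} (hk : k ∈ spectrum 𝕜 x) :
    (‖k‖₊ : ENNReal) ≤ spectralRadius 𝕜 x :=
  le_iSup₂ (α := ENNReal) k hk

theorem spectralRadius_mul_le_mul_swap (x y : A) :
    spectralRadius 𝕜 (x * y) ≤ spectralRadius 𝕜 (y * x) := by
  refine iSup₂_le fun k hk => ?_
  rcases eq_or_ne k 0 with rfl | hk0
  · simp
  · have hmem : k ∈ spectrum 𝕜 (x * y) \ {0} := ⟨hk, hk0⟩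
    rw [spectrum.nonzero_mul_comm] at hmem
    exact nnnorm_le_spectralRadius hmem.1

theorem spectralRadius_mul_comm (x y : A) :
    spectralRadius 𝕜 (x * y) = spectralRadius 𝕜 (y * x) :=
  le_antisymm (spectralRadius_mul_le_mul_swap x y) (spectralRadius_mul_le_mul_swap y x)

theorem spectralRadius_eq_zero_of_isNilpotent {x : A} (hx : IsNilpotent x) :
    spectralRadius 𝕜 x = 0 := by
  obtain ⟨n, hn⟩ := hx
  have hpow := spectrum.spectralRadius_pow_le (𝕜 := 𝕜) x (n + 1) n.succ_ne_zero
  rw [pow_succ x, hn, zero_mul, spectrum.spectralRadius_zero, nonpos_iff_eq_zero] at hpow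
  exact eq_zero_of_pow_eq_zero hpow

theorem spectralRadius_le_one_of_isIdempotentElem {e : A} (he : IsIdempotentElem e) :
    spectralRadius 𝕜 e ≤ 1 := by
  refine iSup₂_le fun k hk => ?_
  obtain rfl | rfl : k = 0 ∨ k = 1 := by simpa using he.spectrum_subset 𝕜 hk
  all_goals simp

theorem norm_le_one_of_spectralRadius_smul_le {e : A} (he : IsIdempotentElem e) (he0 : e ≠ 0)
    {c : 𝕜} (h : spectralRadius 𝕜 (c • e) ≤ spectralRadius 𝕜 e) : ‖c‖ ≤ 1 := by
  have hc : c ∈ spectrum 𝕜 (c • e) :=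
    mem_spectrum_of_smul_eq_smul he0 (by rw [smul_assoc, smul_eq_mul, he.eq])
  exact_mod_cast (nnnorm_le_spectralRadius hc).trans
    (h.trans (spectralRadius_le_one_of_isIdempotentElem he))

end SpectralRadius

section Semisimple

variable {𝕜 A : Type*} [Ring A]

theorem JacobsonSemisimple.eq_zero_of_forall_spectralRadius_eq_zero [NormedField 𝕜] [Algebra 𝕜 A]
    (hA : JacobsonSemisimple A) {z : A} (hz : ∀ y, spectralRadius 𝕜 (y * z) = 0) : z = 0 := by
  suffices h : z ∈ TwoSidedIdeal.jacobson (⊥ : TwoSidedIdeal A) by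
    rwa [hA, TwoSidedIdeal.mem_bot] at h
  rw [TwoSidedIdeal.mem_jacobson_iff]
  intro y
  have hnotMem : (-1 : 𝕜) ∉ spectrum 𝕜 (y * z) := fun hmem => by
    simpa [hz y] using nnnorm_le_spectralRadius hmem
  obtain ⟨u, hu⟩ : IsUnit (y * z + 1) := by
    simpa [add_comm] using (spectrum.notMem_iff.1 hnotMem).neg
  refine ⟨↑u⁻¹, ?_⟩
  have hinv : (↑u⁻¹ : A) * y * z + ↑u⁻¹ = 1 := by
    rw [← u.inv_mul, hu, mul_add, mul_one, mul_assoc]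
  rw [hinv, sub_self]
  exact zero_mem _

theorem JacobsonSemisimple.exists_isMaximal_notMem (hA : JacobsonSemisimple A) {z : A}
    (hz : z ≠ 0) : ∃ L : Ideal A, L.IsMaximal ∧ z ∉ L := by
  contrapose! hz
  have hmem : z ∈ TwoSidedIdeal.asIdeal (TwoSidedIdeal.jacobson (⊥ : TwoSidedIdeal A)) := by
    rw [TwoSidedIdeal.asIdeal_jacobson, Ideal.jacobson, Ideal.mem_sInf]
    exact fun {J} hJ => hz J hJ.2
  rw [hA] at hmem
  simpa using hmem

theorem JacobsonSemisimple.mul_eq_self_of_spectralRadius_le [NormedField 𝕜] [Algebra 𝕜 A]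
    (hA : JacobsonSemisimple A) {a b e : A} (he : e * b = b)
    (h : ∀ x : A, spectralRadius 𝕜 (a * x) ≤ spectralRadius 𝕜 (b * x)) : e * a = a := by
  suffices h0 : (1 - e) * a = 0 by
    rw [sub_mul, one_mul, sub_eq_zero] at h0
    exact h0.symm
  refine hA.eq_zero_of_forall_spectralRadius_eq_zero (𝕜 := 𝕜) fun y => nonpos_iff_eq_zero.1 ?_
  have hb : y * (1 - e) * b = 0 := by rw [mul_assoc, sub_mul, he, one_mul, sub_self, mul_zero]
  calc spectralRadius 𝕜 (y * ((1 - e) * a))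
      = spectralRadius 𝕜 (a * (y * (1 - e))) := by rw [← mul_assoc, spectralRadius_mul_comm]
    _ ≤ spectralRadius 𝕜 (b * (y * (1 - e))) := h _
    _ = 0 := by rw [spectralRadius_mul_comm, hb, spectrum.spectralRadius_zero]

theorem SocleIsMinimalTwoSidedIdeal.exists_isAtom [Algebra ℂ A]
    (h : SocleIsMinimalTwoSidedIdeal A) :
    ∃ I : TwoSidedIdeal A, IsAtom I ∧ (I : Set A) = socle A := by
  obtain ⟨I, hI, hI0, hmin⟩ := h
  exact ⟨I, ⟨hI0, fun J hJ => (hmin J hJ.le).resolve_right hJ.ne⟩, hI⟩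

end Semisimple

theorem injOn_of_isAtom {F R S : Type*} [Ring R] [Ring S] [FunLike F R S] [RingHomClass F R S]
    (f : F) {I : TwoSidedIdeal R} (hI : IsAtom I) {b : R} (hbI : b ∈ I) (hb : f b ≠ 0) :
    Set.InjOn f (I : Set R) := by
  have hker : ¬ I ≤ TwoSidedIdeal.ker f := fun hle => hb ((TwoSidedIdeal.mem_ker f).1 (hle hbI))
  have hdisj := disjoint_iff.1 (hI.not_le_iff_disjoint.1 hker)
  intro x hx y hy hxy
  have hmem : x - y ∈ I ⊓ TwoSidedIdeal.ker f :=
    (TwoSidedIdeal.mem_inf R).2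
      ⟨I.sub_mem hx hy, (TwoSidedIdeal.mem_ker f).2 (by rw [map_sub, hxy, sub_self])⟩
  rw [hdisj, TwoSidedIdeal.mem_bot] at hmem
  exact sub_eq_zero.1 hmem

section LinearAlgebra

variable {K V W : Type*} [Field K] [AddCommGroup V] [Module K V] [AddCommGroup W] [Module K W]

theorem exists_linearMap_apply_eq_of_linearIndependent {ι : Type*} {v : ι → V}
    (hv : LinearIndependent K v) (w : ι → W) : ∃ f : V →ₗ[K] W, ∀ i, f (v i) = w i := by
  obtain ⟨f, hf⟩ := ((Module.Basis.span hv).constr K w).exists_extend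
  refine ⟨f, fun i => ?_⟩
  have hi := (Module.Basis.span hv).constr_basis K w i
  rwa [← hf, LinearMap.comp_apply, Submodule.subtype_apply, Module.Basis.span_apply] at hi

theorem exists_linearMap_comp_comp_eq_self (g : V →ₗ[K] W) :
    ∃ s : W →ₗ[K] V, g ∘ₗ s ∘ₗ g = g := by
  obtain ⟨r, hr⟩ := g.rangeRestrict.exists_rightInverse_of_surjective g.range_rangeRestrict
  obtain ⟨s, rfl⟩ := r.exists_extend
  refine ⟨s, LinearMap.ext fun v => ?_⟩
  exact congrArg Subtype.val (LinearMap.congr_fun hr (g.rangeRestrict v))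

theorem exists_eq_smul_of_forall_mem_span_singleton {f g : V →ₗ[K] W}
    (h : ∀ v, f v ∈ K ∙ g v) : ∃ c : K, f = c • g := by
  obtain ⟨s, hs⟩ := exists_linearMap_comp_comp_eq_self g
  have hker : ∀ v, g v = 0 → f v = 0 := fun v hv => by simpa [hv] using h v
  have hfs : ∀ v, f (s (g v)) = f v := fun v => by
    rw [← sub_eq_zero, ← map_sub]
    refine hker _ ?_
    rw [map_sub, sub_eq_zero]
    exact LinearMap.congr_fun hs v
  have hline : ∀ w : g.range, f (s w) ∈ K ∙ (w : W) := by
    rintro ⟨_, v, rfl⟩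
    exact (hfs v).symm ▸ h v
  let T : Module.End K g.range := (f ∘ₗ s).restrict fun w hw =>
    (Submodule.span_singleton_le_iff_mem _ _).2 hw (hline ⟨w, hw⟩)
  obtain ⟨c, hc⟩ : ∃ c : K, T = c • 1 := by
    refine LinearMap.exists_eq_smul_id_of_forall_notLinearIndependent fun w hw => ?_
    obtain ⟨k, hk⟩ := Submodule.mem_span_singleton.1 (hline w)
    have hkT : k • w = T w := Subtype.ext hk
    simpa using LinearIndependent.pair_iff.1 hw k (-1) (by rw [hkT]; simp)
  refine ⟨c, LinearMap.ext fun v => ?_⟩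
  have hv := congrArg Subtype.val (LinearMap.congr_fun hc (g.rangeRestrict v))
  exact (hfs v).symm.trans hv

end LinearAlgebra

/-- The conclusion of the Jacobson density theorem for a module `M` over a `K`-algebra `A` with
scalar commutant: every `K`-linear endomorphism of `M` agrees on each finite-dimensional subspace
with the action of an element of `A`. -/
def IsStrictlyDense (K A M : Type*) [Field K] [SMul A M] [AddCommGroup M] [Module K M] : Prop :=
  ∀ (f : M →ₗ[K] M) (V : Submodule K M), V.FG → ∃ r : A, ∀ m ∈ V, r • m = f m

section Density

theorem isStrictlyDense_of_forall_end_eq_smul {K A M : Type*} [Field K] [Ring A] [Algebra K A]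
    [AddCommGroup M] [Module K M] [Module A M] [IsScalarTower K A M] [IsSimpleModule A M]
    (hend : ∀ T : Module.End A M, ∃ k : K, T = k • 1) : IsStrictlyDense K A M := by
  rintro f _ ⟨s, rfl⟩
  let F : Module.End (Module.End A M) M :=
    { toFun := f
      map_add' := f.map_add
      map_smul' := fun T m => by
        obtain ⟨k, rfl⟩ := hend T
        simp }
  obtain ⟨r, hr⟩ := jacobson_density F s
  refine ⟨r, fun m hm => ?_⟩
  exact LinearMap.eqOn_span (f := Algebra.lsmul K K M r) (g := f) (fun m hm => (hr m hm).symm) hm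

theorem continuous_end_quotient {A : Type*} [Ring A] [TopologicalSpace A] [ContinuousMul A]
    (L : Ideal A) (T : Module.End A (A ⧸ L)) : Continuous T := by
  obtain ⟨t, ht⟩ := L.mkQ_surjective (T (L.mkQ 1))
  have hcomp : T ∘ L.mkQ = L.mkQ ∘ (· * t) := funext fun y => by
    calc T (L.mkQ y) = y • T (L.mkQ 1) := by rw [← map_smul, ← map_smul, smul_eq_mul, mul_one]
      _ = L.mkQ (y * t) := by rw [← ht, ← map_smul, smul_eq_mul]
  rw [L.isQuotientMap_mkQ.continuous_iff, hcomp]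
  exact L.isQuotientMap_mkQ.continuous.comp (continuous_mul_const t)

variable {A : Type*} [NormedRing A] [NormedAlgebra ℂ A] [CompleteSpace A]

-- `T` is bounded, so `k - T` is singular for some `k`, and then it vanishes by Schur's lemma.
theorem end_quotient_eq_smul_one (L : Ideal A) [hL : L.IsMaximal] (T : Module.End A (A ⧸ L)) :
    ∃ k : ℂ, T = k • 1 := by
  have : IsSimpleModule A (A ⧸ L) := isSimpleModule_iff_isCoatom.2 hL.out
  have : Nontrivial (A ⧸ L) := IsSimpleModule.nontrivial A (A ⧸ L)
  let S : (A ⧸ L) →L[ℂ] (A ⧸ L) := ⟨T.restrictScalars ℂ, continuous_end_quotient L T⟩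
  obtain ⟨k, hk⟩ := spectrum.nonempty S
  refine ⟨k, (sub_eq_zero.1 ((LinearMap.bijective_or_eq_zero (k • 1 - T)).resolve_left ?_)).symm⟩
  intro hbij
  refine hk (ContinuousLinearMap.isUnit_iff_bijective.2 ?_)
  have hcoe : ⇑(algebraMap ℂ ((A ⧸ L) →L[ℂ] (A ⧸ L)) k - S) = ⇑(k • 1 - T) := by
    ext m
    have hS : S m = T m := rfl
    simp [hS, Algebra.algebraMap_eq_smul_one]
  rwa [hcoe]

theorem isStrictlyDense_quotient (L : Ideal A) [hL : L.IsMaximal] :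
    IsStrictlyDense ℂ A (A ⧸ L) :=
  have : IsSimpleModule A (A ⧸ L) := isSimpleModule_iff_isCoatom.2 hL.out
  isStrictlyDense_of_forall_end_eq_smul (end_quotient_eq_smul_one L)

end Density

namespace IsStrictlyDense

variable {A M : Type*} [Ring A] [AddCommGroup M] [Module A M]

section Field

variable {K : Type*} [Field K] [Algebra K A] [Module K M] [IsScalarTower K A M]

theorem exists_mul_mul_smul_eq (hM : IsStrictlyDense K A M) {b : A}
    (hb : (Algebra.lsmul K K M b).range.FG) :
    ∃ d : A, ∀ m : M, (b * d * b) • m = b • m := by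
  obtain ⟨s, hs⟩ := exists_linearMap_comp_comp_eq_self (Algebra.lsmul K K M b)
  obtain ⟨d, hd⟩ := hM s _ hb
  refine ⟨d, fun m => ?_⟩
  rw [mul_smul, mul_smul, hd (b • m) ⟨m, rfl⟩]
  exact LinearMap.congr_fun hs m

theorem exists_mul_smul_eq_self_and_sq_smul_eq_zero (hM : IsStrictlyDense K A M) {a b : A}
    (hb : (Algebra.lsmul K K M b).range.FG) {m : M} (hm : a • m ∉ K ∙ (b • m)) :
    ∃ x : A, (x * a) • m = m ∧ ∀ m' : M, (x * b) ^ 2 • m' = 0 := by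
  obtain ⟨φ, hφa, hφb⟩ := Submodule.exists_le_ker_of_notMem hm
  have hφbm : φ (b • m) = 0 := hφb (Submodule.mem_span_singleton_self _)
  obtain ⟨x, hx⟩ := hM (φ.smulRight ((φ (a • m))⁻¹ • m)) _
    (hb.sup (Submodule.fg_span_singleton (a • m)))
  have hxb (m' : M) : (x * b) • m' = φ (b • m') • (φ (a • m))⁻¹ • m := by
    rw [mul_smul, hx (b • m') (Submodule.mem_sup_left ⟨m', rfl⟩), LinearMap.smulRight_apply]
  refine ⟨x, ?_, fun m' => ?_⟩
  · rw [mul_smul, hx _ (Submodule.mem_sup_right (Submodule.mem_span_singleton_self _)),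
      LinearMap.smulRight_apply, smul_inv_smul₀ hφa]
  · rw [sq, mul_smul, hxb m', smul_comm, smul_comm (x * b), hxb m, hφbm, zero_smul, smul_zero,
      smul_zero]

end Field

theorem smul_mem_span_of_spectralRadius_le {𝕜 : Type*} [NormedField 𝕜] [Algebra 𝕜 A]
    [Module 𝕜 M] [IsScalarTower 𝕜 A M] (hM : IsStrictlyDense 𝕜 A M) {I : TwoSidedIdeal A}
    (hinj : Set.InjOn (Algebra.lsmul 𝕜 𝕜 M) (I : Set A)) {a b : A} (hbI : b ∈ I)
    (hb : (Algebra.lsmul 𝕜 𝕜 M b).range.FG)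
    (h : ∀ x : A, spectralRadius 𝕜 (a * x) ≤ spectralRadius 𝕜 (b * x)) (m : M) :
    a • m ∈ 𝕜 ∙ (b • m) := by
  by_contra hnotMem
  obtain ⟨x, hxa, hxb⟩ := hM.exists_mul_smul_eq_self_and_sq_smul_eq_zero hb hnotMem
  have hm : m ≠ 0 := fun h0 => hnotMem (by simp [h0])
  have hsq : (x * b) ^ 2 = 0 := by
    have hmem : (x * b) ^ 2 ∈ I := sq (x * b) ▸ I.mul_mem_left _ _ (I.mul_mem_left _ _ hbI)
    exact hinj hmem I.zero_mem ((LinearMap.ext hxb).trans (map_zero _).symm)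
  have hone : (‖(1 : 𝕜)‖₊ : ENNReal) ≤ 0 := calc
    (‖(1 : 𝕜)‖₊ : ENNReal) ≤ spectralRadius 𝕜 (x * a) :=
        nnnorm_le_spectralRadius (mem_spectrum_of_smul_eq_smul hm (by rw [hxa, one_smul]))
    _ = spectralRadius 𝕜 (a * x) := spectralRadius_mul_comm x a
    _ ≤ spectralRadius 𝕜 (b * x) := h x
    _ = spectralRadius 𝕜 (x * b) := spectralRadius_mul_comm b x
    _ = 0 := spectralRadius_eq_zero_of_isNilpotent ⟨2, hsq⟩
  simp at hone

variable [Algebra ℂ A] [Module ℂ M] [IsScalarTower ℂ A M]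

-- If `r • b • v i = (i + 1) • v i`, then `r * b` has the `n` nonzero eigenvalues `1, …, n`.
theorem natCast_le_srank (hM : IsStrictlyDense ℂ A M) {b : A} {n : ℕ} {v : Fin n → M}
    (hv : LinearIndependent ℂ fun i => b • v i) : (n : ℕ∞) ≤ srank b := by
  let k : Fin n → ℂ := fun i => (i : ℕ) + 1
  have hk : k.Injective := fun i j hij => by simpa [k, Fin.ext_iff] using hij
  obtain ⟨f, hf⟩ := exists_linearMap_apply_eq_of_linearIndependent hv fun i => k i • v i
  obtain ⟨r, hr⟩ := hM f _ (Submodule.fg_span (Set.finite_range fun i => b • v i))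
  have hspec : Set.range k ⊆ nzSpec (r * b) := by
    rintro _ ⟨i, rfl⟩
    have hvi : v i ≠ 0 := fun h0 => hv.ne_zero i (by rw [h0, smul_zero])
    refine ⟨mem_spectrum_of_smul_eq_smul hvi ?_, Nat.cast_add_one_ne_zero _⟩
    rw [mul_smul, hr _ (Submodule.subset_span ⟨i, rfl⟩), hf]
  calc (n : ℕ∞) = (Set.range k).encard := by rw [← Set.image_univ, hk.encard_image]; simp
    _ ≤ (nzSpec (r * b)).encard := Set.encard_le_encard hspec
    _ ≤ srank b := le_iSup (fun x : A => (nzSpec (x * b)).encard) r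

theorem fg_range_lsmul (hM : IsStrictlyDense ℂ A M) {b : A} (hb : b ∈ socle A) :
    (Algebra.lsmul ℂ ℂ M b).range.FG := by
  rw [← Module.Finite.iff_fg, ← Module.rank_lt_aleph0_iff]
  by_contra! hinf
  refine hb (ENat.eq_top_iff_forall_ge.2 fun n => ?_)
  obtain ⟨w, hw⟩ := exists_linearIndependent_of_le_rank (Cardinal.natCast_lt_aleph0.le.trans hinf)
  choose v hv using fun i => (w i).2
  have hbv : LinearIndependent ℂ fun i => b • v i :=
    (funext hv : (fun i => b • v i) = Subtype.val ∘ w) ▸ hw.map' _ (Submodule.ker_subtype _)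
  exact hM.natCast_le_srank hbv

end IsStrictlyDense

theorem scalar_multiple_of_spectralRadius_le_of_idempotent_mul_unit_general
    {A : Type*} [NormedRing A] [NormedAlgebra ℂ A] [CompleteSpace A]
    (hss : JacobsonSemisimple A) {I : TwoSidedIdeal A} (hI : IsAtom I)
    {a b : A} (hbI : b ∈ I) (hb : b ∈ socle A)
    (h : ∀ x : A, spectralRadius ℂ (a * x) ≤ spectralRadius ℂ (b * x)) :
    ∃ lam : ℂ, ‖lam‖ ≤ 1 ∧ a = lam • b := by
  rcases eq_or_ne b 0 with rfl | hb0
  · exact ⟨0, by simp, by simpa using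
      (hss.mul_eq_self_of_spectralRadius_le (mul_zero 0) h).symm⟩
  obtain ⟨L, hL, hbL⟩ := hss.exists_isMaximal_notMem hb0
  have hM := isStrictlyDense_quotient L
  have hfg := hM.fg_range_lsmul hb
  have hb1 : Algebra.lsmul ℂ ℂ (A ⧸ L) b ≠ 0 := fun h0 => hbL <| by
    simpa [← Submodule.Quotient.mk_smul] using LinearMap.congr_fun h0 (Submodule.Quotient.mk 1)
  have hinj := injOn_of_isAtom (Algebra.lsmul ℂ ℂ (A ⧸ L)) hI hbI hb1
  obtain ⟨d, hd⟩ := hM.exists_mul_mul_smul_eq hfg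
  have hbdb : b * d * b = b := hinj (I.mul_mem_left _ _ hbI) hbI (LinearMap.ext hd)
  have ha : b * d * a = a := hss.mul_eq_self_of_spectralRadius_le hbdb h
  have haI : a ∈ I := ha ▸ I.mul_mem_right _ _ (I.mul_mem_right _ _ hbI)
  obtain ⟨c, hc⟩ := exists_eq_smul_of_forall_mem_span_singleton
    (f := Algebra.lsmul ℂ ℂ (A ⧸ L) a) (g := Algebra.lsmul ℂ ℂ (A ⧸ L) b)
    (hM.smul_mem_span_of_spectralRadius_le hinj hbI hfg h)
  have hcb : c • b ∈ I := Algebra.smul_def c b ▸ I.mul_mem_left _ _ hbI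
  obtain rfl : a = c • b := hinj haI hcb (hc.trans (map_smul _ c b).symm)
  refine ⟨c, norm_le_one_of_spectralRadius_smul_le (e := b * d) ?_ ?_ ?_, rfl⟩
  · rw [IsIdempotentElem, ← mul_assoc, hbdb]
  · exact fun h0 => hb0 (by rw [← hbdb, h0, zero_mul])
  · simpa using h d

theorem scalar_multiple_of_spectralRadius_le_of_idempotent_mul_unit
    {A : Type*} [NormedRing A] [NormOneClass A] [NormedAlgebra ℂ A] [CompleteSpace A]
    (hss : JacobsonSemisimple A) (hmin : SocleIsMinimalTwoSidedIdeal A)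
    (a b p t : A) (hp : p * p = p) (hpsoc : p ∈ socle A) (ht : IsUnit t) (hb : b = p * t)
    (h : ∀ x : A, spectralRadius ℂ (a * x) ≤ spectralRadius ℂ (b * x)) :
    ∃ lam : ℂ, ‖lam‖ ≤ 1 ∧ a = lam • b := by
  obtain ⟨I, hI, hIsoc⟩ := hmin.exists_isAtom
  have hbI : b ∈ I := hb ▸ I.mul_mem_right p t (hIsoc ▸ hpsoc : p ∈ (I : Set A))
  exact scalar_multiple_of_spectralRadius_le_of_idempotent_mul_unit_general hss hI hbI
    (hIsoc ▸ hbI : b ∈ socle A) h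
end
end
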